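/- arXiv:2012.01484 — 3 statements merged into one kernel-verified Lean document; each statement's English description precedes it below -/
import Mathlib

section
/- Let λ > 0 and let f : ℝ³ → ℝ be a smooth function that is bounded together with all of its partial derivatives. Define u(x) = ∫_{ℝ³} e^{-λ|y|}/(4π|y|) · f(x − y) dy. Then u is twice continuously differentiable and satisfies −Δu(x) + λ² u(x) = f(x) for every x ∈ ℝ³. -/
/-!
The kernel `e^{-λ|y|}/|y|` is integrable on `ℝ³` and `f` has bounded derivatives, so differentiation
under the integral sign gives that `u` is `C²` with `Δu(x) = ∫ G(y) (Δf)(x - y) dy`. It remains to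
see that `∫ G (λ² g - Δg) = g(0)` for `g(y) = f(x - y)` (`integral_yukawa_mul_screened`).

To avoid the singularity at the origin, `|y|` is replaced by `s = √(|y|² + ε²)`. The kernel
`e^{-λs}/s` is smooth and decays exponentially with its derivatives, so integration by parts has
no boundary terms, and a direct computation gives
`(λ² - Δ)(e^{-λs}/s) = ε² e^{-λs} (λ²/s³ + 3λ/s⁴ + 3/s⁵)`
(`regKernel_laplacian`, `integral_regKernel_mul_screened`).
As `ε → 0⁺`, dominated convergence restores the original kernel on the left
(`tendsto_integral_regKernel`), while on the right the rescaling `y = εz` shows that the sources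
are an approximate identity whose mass is `∫ 3 (1 + |z|²)^{-5/2} dz = 4π`
(`tendsto_integral_source`, `integral_three_div_regRadius`).
-/

open Real MeasureTheory

/-- The Laplacian of `u : ℝ^d → ℝ`: the sum of the second partial derivatives
along the coordinate directions. -/
noncomputable def laplacian {d : ℕ} (u : EuclideanSpace ℝ (Fin d) → ℝ)
    (x : EuclideanSpace ℝ (Fin d)) : ℝ :=
  ∑ i, fderiv ℝ (fun y => fderiv ℝ u y (EuclideanSpace.single i 1)) x
    (EuclideanSpace.single i 1)

open Set Filter Topology

/-- Euclidean three-space. -/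
abbrev E3 : Type := EuclideanSpace ℝ (Fin 3)

/-! ### Convolution with an integrable kernel -/

section Convolution

variable {H : Type*} [NormedAddCommGroup H] [NormedSpace ℝ H] {G : E3 → ℝ} {F : E3 → H}

lemma integrable_smul_translate (hG : Integrable G) (hF : Continuous F) {C : ℝ}
    (hC : ∀ x, ‖F x‖ ≤ C) (x : E3) : Integrable (fun y => G y • F (x - y)) := by
  have hm : AEStronglyMeasurable (fun y => F (x - y)) (volume : Measure E3) :=
    (hF.comp (by fun_prop : Continuous fun y => x - y)).aestronglyMeasurable
  exact hG.smul_bdd C hm (ae_of_all _ fun y => hC _)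

lemma continuous_integral_smul_translate (hG : Integrable G) (hF : Continuous F) {C : ℝ}
    (hC : ∀ x, ‖F x‖ ≤ C) : Continuous (fun x => ∫ y, G y • F (x - y)) := by
  refine continuous_of_dominated (bound := fun y => ‖G y‖ * C)
    (fun x => (integrable_smul_translate hG hF hC x).aestronglyMeasurable)
    (fun x => ae_of_all _ fun y => ?_) (hG.norm.mul_const C) (ae_of_all _ fun y => ?_)
  · rw [norm_smul]
    exact mul_le_mul_of_nonneg_left (hC _) (norm_nonneg _)
  · fun_prop

lemma hasFDerivAt_integral_smul_translate (hG : Integrable G) (hF : ContDiff ℝ 1 F) {C C' : ℝ}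
    (hC : ∀ x, ‖F x‖ ≤ C) (hC' : ∀ x, ‖fderiv ℝ F x‖ ≤ C') (x : E3) :
    HasFDerivAt (fun x => ∫ y, G y • F (x - y)) (∫ y, G y • fderiv ℝ F (x - y)) x := by
  have hF' : Continuous (fderiv ℝ F) := hF.continuous_fderiv one_ne_zero
  refine hasFDerivAt_integral_of_dominated_of_fderiv_le (bound := fun y => ‖G y‖ * C')
    (F' := fun x y => G y • fderiv ℝ F (x - y)) univ_mem
    (Eventually.of_forall fun x =>
      (integrable_smul_translate hG hF.continuous hC x).aestronglyMeasurable)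
    (integrable_smul_translate hG hF.continuous hC x)
    (integrable_smul_translate hG hF' hC' x).aestronglyMeasurable
    (ae_of_all _ fun y x _ => ?_) (hG.norm.mul_const C') (ae_of_all _ fun y x _ => ?_)
  · rw [norm_smul]
    exact mul_le_mul_of_nonneg_left (hC' _) (norm_nonneg _)
  · have h := (hF.differentiable one_ne_zero (x - y)).hasFDerivAt
    have h2 : HasFDerivAt (fun x => F (x - y)) (fderiv ℝ F (x - y)) x := by
      have h3 := h.comp x ((hasFDerivAt_id x).sub_const y)
      rw [ContinuousLinearMap.comp_id] at h3
      exact h3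
    exact h2.const_smul (G y)

end Convolution

/-! ### The regularised kernel and its derivatives -/

/-- The regularised radius `√(|y|² + ε²)`. -/
noncomputable def regRadius (ε : ℝ) (y : E3) : ℝ := √(‖y‖ ^ 2 + ε ^ 2)

/-- `4π` times the fundamental solution, with `|y|` replaced by the regularised radius. -/
noncomputable def regKernel (l ε : ℝ) (y : E3) : ℝ :=
  exp (-(l * regRadius ε y)) / regRadius ε y

/-- The radial profile `a` for which the gradient of `regKernel` is `-a(s) y`. -/
noncomputable def profA (l s : ℝ) : ℝ := exp (-(l * s)) * (l / s ^ 2 + 1 / s ^ 3)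

/-- The radial profile `b` with `profA' (s) = -s b(s)`. -/
noncomputable def profB (l s : ℝ) : ℝ :=
  exp (-(l * s)) * (l ^ 2 / s ^ 3 + 3 * l / s ^ 4 + 3 / s ^ 5)

lemma regRadius_sq (ε : ℝ) (y : E3) : regRadius ε y ^ 2 = ‖y‖ ^ 2 + ε ^ 2 :=
  Real.sq_sqrt (by positivity)

lemma regRadius_pos {ε : ℝ} (hε : 0 < ε) (y : E3) : 0 < regRadius ε y :=
  Real.sqrt_pos.2 (by positivity)

lemma norm_le_regRadius (ε : ℝ) (y : E3) : ‖y‖ ≤ regRadius ε y :=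
  Real.le_sqrt_of_sq_le (by nlinarith [sq_nonneg ε])

lemma eps_le_regRadius (ε : ℝ) (y : E3) : ε ≤ regRadius ε y :=
  Real.le_sqrt_of_sq_le (by nlinarith [sq_nonneg ‖y‖])

lemma continuous_regRadius (ε : ℝ) : Continuous (regRadius ε) := by
  unfold regRadius; fun_prop

lemma hasFDerivAt_regRadius {ε : ℝ} (hε : 0 < ε) (y : E3) :
    HasFDerivAt (regRadius ε) ((regRadius ε y)⁻¹ • innerSL ℝ y) y := by
  have h1 : HasFDerivAt (fun y : E3 => ‖y‖ ^ 2 + ε ^ 2) (2 • innerSL ℝ y) y :=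
    (hasStrictFDerivAt_norm_sq y).hasFDerivAt.add_const _
  have h2 := h1.sqrt (by positivity)
  refine h2.congr_fderiv ?_
  ext v
  have := (regRadius_pos hε y).ne'
  change 1 / (2 * regRadius ε y) * ((2 : ℕ) • inner ℝ y v) = (regRadius ε y)⁻¹ * inner ℝ y v
  rw [nsmul_eq_mul]
  field_simp
  norm_num

lemma fderiv_radial {ε : ℝ} (hε : 0 < ε) {φ : ℝ → ℝ} {φ' : ℝ} (y : E3)
    (h : HasDerivAt φ φ' (regRadius ε y)) :
    HasFDerivAt (fun y => φ (regRadius ε y)) ((φ' / regRadius ε y) • innerSL ℝ y) y := by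
  refine (h.comp_hasFDerivAt y (hasFDerivAt_regRadius hε y)).congr_fderiv ?_
  rw [smul_smul, div_eq_mul_inv]

lemma hasDerivAt_profile (l : ℝ) {s : ℝ} (hs : 0 < s) :
    HasDerivAt (fun s => exp (-(l * s)) / s) (-(s * profA l s)) s := by
  have h1 : HasDerivAt (fun s : ℝ => exp (-(l * s))) (exp (-(l * s)) * -(l * 1)) s :=
    ((hasDerivAt_id s).const_mul l).neg.exp
  refine (h1.div (hasDerivAt_id s) hs.ne').congr_deriv ?_
  simp only [profA, id]
  field_simp
  ring

lemma hasDerivAt_profA (l : ℝ) {s : ℝ} (hs : 0 < s) :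
    HasDerivAt (profA l) (-(s * profB l s)) s := by
  have h1 : HasDerivAt (fun s : ℝ => exp (-(l * s))) (exp (-(l * s)) * -(l * 1)) s :=
    ((hasDerivAt_id s).const_mul l).neg.exp
  have h2 := ((hasDerivAt_const s l).div (hasDerivAt_pow 2 s) (by positivity)).add
    ((hasDerivAt_const s 1).div (hasDerivAt_pow 3 s) (by positivity))
  refine (h1.mul h2).congr_deriv ?_
  simp only [profB, Pi.add_apply, Pi.div_apply]
  push_cast
  field_simp
  ring

/-- The first partial derivative of `regKernel` is `-yᵢ a(s)`. -/
lemma regKernel_deriv (l : ℝ) {ε : ℝ} (hε : 0 < ε) (i : Fin 3) (y : E3) :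
    DifferentiableAt ℝ (regKernel l ε) y ∧
    fderiv ℝ (regKernel l ε) y (EuclideanSpace.single i 1) = -(y i * profA l (regRadius ε y)) := by
  have hs := regRadius_pos hε y
  have h := fderiv_radial hε y (hasDerivAt_profile l hs)
  refine ⟨h.differentiableAt, ?_⟩
  change fderiv ℝ (fun y => exp (-(l * regRadius ε y)) / regRadius ε y) y _ = _
  rw [h.fderiv]
  simp only [smul_apply, innerSL_apply_apply, EuclideanSpace.inner_single_right]
  simp
  field_simp

/-- The second pure partial derivative of `regKernel` is `-a(s) + yᵢ² b(s)`. -/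
lemma regKernel_deriv2 (l : ℝ) {ε : ℝ} (hε : 0 < ε) (i : Fin 3) (y : E3) :
    DifferentiableAt ℝ (fun y : E3 => -(y i * profA l (regRadius ε y))) y ∧
    fderiv ℝ (fun y : E3 => -(y i * profA l (regRadius ε y))) y (EuclideanSpace.single i 1) =
      -profA l (regRadius ε y) + y i ^ 2 * profB l (regRadius ε y) := by
  have hs := regRadius_pos hε y
  have h := fderiv_radial hε y (hasDerivAt_profA l hs)
  have hi : HasFDerivAt (fun y : E3 => y i) (EuclideanSpace.proj (𝕜 := ℝ) i) y :=
    (EuclideanSpace.proj (𝕜 := ℝ) i).hasFDerivAt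
  have h2 := (hi.mul h).neg
  refine ⟨h2.differentiableAt, ?_⟩
  erw [h2.fderiv]
  simp [EuclideanSpace.inner_single_right]
  field_simp

/-- Since `∑ yᵢ² = s² - ε²`, the regularised kernel solves the screened equation with source
`ε² b(s)`. -/
lemma regKernel_laplacian (l : ℝ) {ε : ℝ} (hε : 0 < ε) (y : E3) :
    ∑ i, (-profA l (regRadius ε y) + y i ^ 2 * profB l (regRadius ε y)) =
      l ^ 2 * regKernel l ε y - ε ^ 2 * profB l (regRadius ε y) := by
  have hs := regRadius_pos hε y
  have hn : ∑ i, y i ^ 2 = regRadius ε y ^ 2 - ε ^ 2 := by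
    rw [regRadius_sq, EuclideanSpace.norm_sq_eq]; simp
  rw [Finset.sum_add_distrib, ← Finset.sum_mul, hn, sub_mul]
  have : ∑ _i : Fin 3, -profA l (regRadius ε y) + regRadius ε y ^ 2 * profB l (regRadius ε y)
      = l ^ 2 * regKernel l ε y := by
    simp only [Finset.sum_const, Finset.card_univ, Fintype.card_fin, profA, profB, regKernel]
    rw [nsmul_eq_mul]
    push_cast
    field_simp
    ring
  linarith

/-! ### Decay and integrability -/

lemma integrable_exp_neg_norm {l : ℝ} (hl : 0 < l) :
    Integrable (fun y : E3 => exp (-(l * ‖y‖))) := by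
  have h := integrableOn_rpow_mul_exp_neg_mul_rpow (p := 1) (s := 2) (by norm_num) one_pos hl
  refine (integrable_fun_norm_addHaar (volume : Measure E3)
    (f := fun r : ℝ => exp (-(l * r)))).2 ?_
  refine h.congr_fun (fun r _ => ?_) measurableSet_Ioi
  simp

lemma integrable_yukawa {l : ℝ} (hl : 0 < l) :
    Integrable (fun y : E3 => exp (-(l * ‖y‖)) / ‖y‖) := by
  have h := integrableOn_rpow_mul_exp_neg_mul_rpow (p := 1) (s := 1) (by norm_num) one_pos hl
  refine (integrable_fun_norm_addHaar (volume : Measure E3)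
    (f := fun r : ℝ => exp (-(l * r)) / r)).2 ?_
  refine h.congr_fun (fun r hr => ?_) measurableSet_Ioi
  have : r ≠ 0 := (mem_Ioi.1 hr).ne'
  simp
  field_simp

lemma exp_regRadius_le {l : ℝ} (hl : 0 < l) (ε : ℝ) (y : E3) :
    exp (-(l * regRadius ε y)) ≤ exp (-(l * ‖y‖)) :=
  exp_le_exp.2 (neg_le_neg (mul_le_mul_of_nonneg_left (norm_le_regRadius ε y) hl.le))

lemma integrable_kernel_mul {l : ℝ} (hl : 0 < l) {K h : E3 → ℝ} {C C' : ℝ} (hK : Measurable K)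
    (hKC : ∀ y, |K y| ≤ exp (-(l * ‖y‖)) * C) (hh : Continuous h) (hhC : ∀ y, |h y| ≤ C') :
    Integrable (fun y => K y * h y) := by
  have hKi : Integrable K := ((integrable_exp_neg_norm hl).mul_const C).mono'
    hK.aestronglyMeasurable (ae_of_all _ hKC)
  exact hKi.mul_bdd (c := C') hh.aestronglyMeasurable (ae_of_all _ hhC)

lemma regKernel_bound {l ε : ℝ} (hl : 0 < l) (hε : 0 < ε) (y : E3) :
    |regKernel l ε y| ≤ exp (-(l * ‖y‖)) * (1 / ε) := by
  have hs := regRadius_pos hε y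
  rw [regKernel, abs_of_pos (by positivity), div_eq_mul_one_div]
  have := exp_regRadius_le hl ε y
  have := eps_le_regRadius ε y
  gcongr

lemma abs_coord_le_regRadius (ε : ℝ) (i : Fin 3) (y : E3) : |y i| ≤ regRadius ε y :=
  (PiLp.norm_apply_le y i).trans (norm_le_regRadius ε y)

lemma regKernel_deriv_bound {l ε : ℝ} (hl : 0 < l) (hε : 0 < ε) (i : Fin 3) (y : E3) :
    |-(y i * profA l (regRadius ε y))| ≤ exp (-(l * ‖y‖)) * (l / ε + 1 / ε ^ 2) := by
  have hs := regRadius_pos hε y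
  have h1 := exp_regRadius_le hl ε y
  have h2 := eps_le_regRadius ε y
  have hA : 0 < profA l (regRadius ε y) := by unfold profA; positivity
  rw [abs_neg, abs_mul, abs_of_pos hA]
  calc |y i| * profA l (regRadius ε y) ≤ regRadius ε y * profA l (regRadius ε y) := by
        gcongr; exact abs_coord_le_regRadius ε i y
    _ = exp (-(l * regRadius ε y)) * (l / regRadius ε y + 1 / regRadius ε y ^ 2) := by
        unfold profA; field_simp
    _ ≤ _ := by gcongr

lemma regKernel_deriv2_bound {l ε : ℝ} (hl : 0 < l) (hε : 0 < ε) (i : Fin 3) (y : E3) :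
    |-profA l (regRadius ε y) + y i ^ 2 * profB l (regRadius ε y)| ≤
      exp (-(l * ‖y‖)) * ((l / ε ^ 2 + 1 / ε ^ 3) + (l ^ 2 / ε + 3 * l / ε ^ 2 + 3 / ε ^ 3)) := by
  have hs := regRadius_pos hε y
  have h1 := exp_regRadius_le hl ε y
  have h2 := eps_le_regRadius ε y
  have hA : 0 < profA l (regRadius ε y) := by unfold profA; positivity
  have hB : 0 < profB l (regRadius ε y) := by unfold profB; positivity
  have h3 : y i ^ 2 ≤ regRadius ε y ^ 2 := by
    rw [← sq_abs]
    gcongr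
    exact abs_coord_le_regRadius ε i y
  calc |-profA l (regRadius ε y) + y i ^ 2 * profB l (regRadius ε y)|
      ≤ profA l (regRadius ε y) + y i ^ 2 * profB l (regRadius ε y) := by
        refine (abs_add_le _ _).trans_eq ?_
        rw [abs_neg, abs_of_pos hA, abs_of_nonneg (by positivity)]
    _ ≤ profA l (regRadius ε y) + regRadius ε y ^ 2 * profB l (regRadius ε y) := by gcongr
    _ = exp (-(l * regRadius ε y)) * ((l / regRadius ε y ^ 2 + 1 / regRadius ε y ^ 3)
          + (l ^ 2 / regRadius ε y + 3 * l / regRadius ε y ^ 2 + 3 / regRadius ε y ^ 3)) := by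
        unfold profA profB; field_simp
    _ ≤ _ := by gcongr

lemma measurable_regKernel (l ε : ℝ) : Measurable (regKernel l ε) := by
  have := (continuous_regRadius ε).measurable
  unfold regKernel; fun_prop

lemma measurable_profA (l ε : ℝ) : Measurable (fun y => profA l (regRadius ε y)) := by
  have := (continuous_regRadius ε).measurable
  unfold profA; fun_prop

lemma measurable_profB (l ε : ℝ) : Measurable (fun y => profB l (regRadius ε y)) := by
  have := (continuous_regRadius ε).measurable
  unfold profB; fun_prop

/-! ### Green's identity for the regularised kernel -/

/-- Two integrations by parts move both derivatives onto the regularised kernel. The boundary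
terms vanish because the kernel decays exponentially and `g` has bounded derivatives. -/
lemma integral_regKernel_mul_deriv2 {l ε : ℝ} (hl : 0 < l) (hε : 0 < ε) {g : E3 → ℝ}
    (hg : ContDiff ℝ 2 g) {C₀ C₁ C₂ : ℝ} (i : Fin 3) (h0 : ∀ y, |g y| ≤ C₀)
    (h1 : ∀ y, |fderiv ℝ g y (EuclideanSpace.single i 1)| ≤ C₁)
    (h2 : ∀ y, |fderiv ℝ (fun y => fderiv ℝ g y (EuclideanSpace.single i 1)) y
      (EuclideanSpace.single i 1)| ≤ C₂) :
    ∫ y, regKernel l ε y * fderiv ℝ (fun y => fderiv ℝ g y (EuclideanSpace.single i 1)) y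
      (EuclideanSpace.single i 1) =
    ∫ y, (-profA l (regRadius ε y) + y i ^ 2 * profB l (regRadius ε y)) * g y := by
  have hA := measurable_profA l ε
  have hB := measurable_profB l ε
  have hc1 : ContDiff ℝ 1 (fun y => fderiv ℝ g y (EuclideanSpace.single i 1)) :=
    (hg.fderiv_right (m := 1) (by norm_num)).clm_apply contDiff_const
  have hc2 : Continuous (fun y => fderiv ℝ (fun y => fderiv ℝ g y (EuclideanSpace.single i 1)) y
      (EuclideanSpace.single i 1)) :=
    (hc1.continuous_fderiv one_ne_zero).clm_apply continuous_const
  have m1 : Measurable (fun y : E3 => -(y i * profA l (regRadius ε y))) := by fun_prop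
  have m2 : Measurable (fun y : E3 => -profA l (regRadius ε y)
      + y i ^ 2 * profB l (regRadius ε y)) := by fun_prop
  have e1 : ∀ y, fderiv ℝ (regKernel l ε) y (EuclideanSpace.single i 1) =
      -(y i * profA l (regRadius ε y)) := fun y => (regKernel_deriv l hε i y).2
  have e2 := fun y => (regKernel_deriv2 l hε i y).2
  rw [integral_mul_fderiv_eq_neg_fderiv_mul_of_integrable]
  · simp_rw [e1]
    rw [integral_mul_fderiv_eq_neg_fderiv_mul_of_integrable, neg_neg]
    · simp_rw [e2]
    · simp_rw [e2]
      exact integrable_kernel_mul hl m2 (regKernel_deriv2_bound hl hε i) hg.continuous h0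
    · exact integrable_kernel_mul hl m1 (regKernel_deriv_bound hl hε i) hc1.continuous h1
    · exact integrable_kernel_mul hl m1 (regKernel_deriv_bound hl hε i) hg.continuous h0
    · exact fun y _ => (regKernel_deriv2 l hε i y).1
    · exact fun y _ => hg.differentiable two_ne_zero y
  · simp_rw [e1]
    exact integrable_kernel_mul hl m1 (regKernel_deriv_bound hl hε i) hc1.continuous h1
  · exact integrable_kernel_mul hl (measurable_regKernel l ε) (regKernel_bound hl hε) hc2 h2
  · exact integrable_kernel_mul hl (measurable_regKernel l ε) (regKernel_bound hl hε)
      hc1.continuous h1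
  · exact fun y _ => (regKernel_deriv l hε i y).1
  · exact fun y _ => hc1.differentiable one_ne_zero y

/-- Green's identity for the regularised kernel. -/
lemma integral_regKernel_mul_screened {l ε : ℝ} (hl : 0 < l) (hε : 0 < ε) {g : E3 → ℝ}
    (hg : ContDiff ℝ 2 g) {C₀ C₁ C₂ : ℝ} (h0 : ∀ y, |g y| ≤ C₀)
    (h1 : ∀ i y, |fderiv ℝ g y (EuclideanSpace.single i 1)| ≤ C₁)
    (h2 : ∀ i y, |fderiv ℝ (fun y => fderiv ℝ g y (EuclideanSpace.single i 1)) y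
      (EuclideanSpace.single i 1)| ≤ C₂) :
    ∫ y, regKernel l ε y * (l ^ 2 * g y - laplacian g y) =
      ∫ y, ε ^ 2 * profB l (regRadius ε y) * g y := by
  have hA := measurable_profA l ε
  have hB := measurable_profB l ε
  have hc2 : ∀ i, Continuous (fun y => fderiv ℝ (fun y => fderiv ℝ g y
      (EuclideanSpace.single i 1)) y (EuclideanSpace.single i 1)) := fun i =>
    (((hg.fderiv_right (m := 1) (by norm_num)).clm_apply
      contDiff_const).continuous_fderiv one_ne_zero).clm_apply continuous_const
  have i0 : Integrable (fun y => regKernel l ε y * g y) :=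
    integrable_kernel_mul hl (measurable_regKernel l ε) (regKernel_bound hl hε) hg.continuous h0
  have i1 := fun i => integrable_kernel_mul hl (measurable_regKernel l ε) (regKernel_bound hl hε)
    (hc2 i) (h2 i)
  have i2 : ∀ i, Integrable (fun y : E3 => (-profA l (regRadius ε y)
      + y i ^ 2 * profB l (regRadius ε y)) * g y) := fun i =>
    integrable_kernel_mul hl (by fun_prop) (regKernel_deriv2_bound hl hε i) hg.continuous h0
  have hL : ∫ y, regKernel l ε y * laplacian g y =
      ∫ y, (l ^ 2 * (regKernel l ε y * g y) - ε ^ 2 * profB l (regRadius ε y) * g y) := by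
    unfold laplacian
    simp_rw [Finset.mul_sum]
    rw [integral_finsetSum _ fun i _ => i1 i]
    simp_rw [fun i => integral_regKernel_mul_deriv2 hl hε hg i h0 (h1 i) (h2 i)]
    rw [← integral_finsetSum _ fun i _ => i2 i]
    congr 1 with y
    rw [← Finset.sum_mul, regKernel_laplacian l hε]
    ring
  have i3 : Integrable (fun y => regKernel l ε y * laplacian g y) := by
    unfold laplacian
    simp_rw [Finset.mul_sum]
    exact integrable_finsetSum _ fun i _ => i1 i
  have i4 : Integrable (fun y => ε ^ 2 * profB l (regRadius ε y) * g y) := by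
    refine ((i0.const_mul (l ^ 2)).sub (integrable_finsetSum Finset.univ fun i _ => i2 i)).congr
      (ae_of_all _ fun y => ?_)
    simp only [Pi.sub_apply]
    rw [← Finset.sum_mul, regKernel_laplacian l hε]
    ring
  have hsplit : ∀ y, regKernel l ε y * (l ^ 2 * g y - laplacian g y) =
      l ^ 2 * (regKernel l ε y * g y) - regKernel l ε y * laplacian g y := fun y => by ring
  simp_rw [hsplit]
  rw [integral_sub (i0.const_mul _) i3, hL, integral_sub (i0.const_mul _) i4]
  ring

/-! ### Removing the regularisation -/

/-- As `ε → 0⁺` the regularised kernel may be replaced by the true one under the integral; the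
true kernel itself is the dominating function. -/
lemma tendsto_integral_regKernel {l : ℝ} (hl : 0 < l) {h : E3 → ℝ} (hh : Continuous h) {C : ℝ}
    (hC : ∀ y, |h y| ≤ C) :
    Tendsto (fun ε => ∫ y, regKernel l ε y * h y) (𝓝[>] 0)
      (𝓝 (∫ y, exp (-(l * ‖y‖)) / ‖y‖ * h y)) := by
  have hne : ∀ᵐ y : E3, y ≠ 0 := by
    simp [ae_iff]
  refine tendsto_integral_filter_of_dominated_convergence
    (fun y => exp (-(l * ‖y‖)) / ‖y‖ * C) (Eventually.of_forall fun ε =>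
      ((measurable_regKernel l ε).mul hh.measurable).aestronglyMeasurable) ?_
    ((integrable_yukawa hl).mul_const C) ?_
  · filter_upwards [self_mem_nhdsWithin] with ε hε
    filter_upwards [hne] with y hy
    have hs := regRadius_pos hε y
    have hy' := norm_pos_iff.2 hy
    have h1 := exp_regRadius_le hl ε y
    have h2 := norm_le_regRadius ε y
    rw [norm_mul, Real.norm_eq_abs, Real.norm_eq_abs, regKernel, abs_of_pos (by positivity)]
    gcongr
    exact hC y
  · filter_upwards [hne] with y hy
    have hy' := norm_pos_iff.2 hy
    have hs0 : regRadius 0 y = ‖y‖ := by simp [regRadius]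
    have hcont : ContinuousAt (fun ε => regRadius ε y) 0 := by unfold regRadius; fun_prop
    have : ContinuousAt (fun ε => regKernel l ε y * h y) 0 := by
      unfold regKernel
      have : regRadius 0 y ≠ 0 := by rw [hs0]; exact hy'.ne'
      fun_prop (disch := assumption)
    have h2 := this.tendsto
    simp only [regKernel, hs0] at h2
    exact h2.mono_left nhdsWithin_le_nhds

lemma integrable_regRadius_pow_four : Integrable (fun z : E3 => 1 / regRadius 1 z ^ 4) := by
  have h := integrable_rpow_neg_one_add_norm_sq (E := E3) (μ := volume) (r := 4) (by simp; norm_num)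
  refine h.congr (ae_of_all _ fun z => ?_)
  have e : regRadius 1 z ^ 4 = (1 + ‖z‖ ^ 2) ^ 2 := by
    have := regRadius_sq 1 z
    calc regRadius 1 z ^ 4 = (regRadius 1 z ^ 2) ^ 2 := by ring
      _ = _ := by rw [this]; ring
  simp only [e]
  rw [show (-4 / 2 : ℝ) = -((2 : ℕ) : ℝ) by norm_num, rpow_neg (by positivity), rpow_natCast,
    one_div]

/-- In polar coordinates this is `4π ∫₀^∞ 3r² (r² + 1)^(-5/2) dr`, and the integrand is the
derivative of `(r / √(r² + 1))³`. -/
lemma integral_three_div_regRadius : ∫ z : E3, 3 / regRadius 1 z ^ 5 = 4 * π := by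
  have hv : (volume : Measure E3).real (Metric.ball 0 1) = π * 4 / 3 := by
    rw [measureReal_def, EuclideanSpace.volume_ball_fin_three]
    simp
    positivity
  have h := integral_fun_norm_addHaar (volume : Measure E3)
    (fun r : ℝ => 3 / √(r ^ 2 + 1 ^ 2) ^ 5)
  have hI : ∫ r in Ioi (0 : ℝ), r ^ 2 * (3 / √(r ^ 2 + 1 ^ 2) ^ 5) = 1 := by
    have hd : ∀ r ∈ Ici (0 : ℝ), HasDerivAt (fun r : ℝ => (r / √(r ^ 2 + 1 ^ 2)) ^ 3)
        (r ^ 2 * (3 / √(r ^ 2 + 1 ^ 2) ^ 5)) r := by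
      intro r _
      have hp : 0 < r ^ 2 + 1 ^ 2 := by positivity
      have hs := Real.sqrt_pos.2 hp
      have hsq := Real.sq_sqrt hp.le
      have h1 : HasDerivAt (fun r : ℝ => √(r ^ 2 + 1 ^ 2)) (r / √(r ^ 2 + 1 ^ 2)) r := by
        refine (((hasDerivAt_pow 2 r).add_const _).sqrt hp.ne').congr_deriv ?_
        push_cast
        field_simp
      refine (((hasDerivAt_id r).div h1 hs.ne').pow 3).congr_deriv ?_
      simp only [id, Pi.div_apply]
      generalize √(r ^ 2 + 1 ^ 2) = s at *
      push_cast
      field_simp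
      rw [hsq]
      ring
    have ht : Tendsto (fun r : ℝ => (r / √(r ^ 2 + 1 ^ 2)) ^ 3) atTop (𝓝 1) := by
      have h1 : Tendsto (fun r : ℝ => (1 / √(1 + (r⁻¹) ^ 2)) ^ 3) atTop
          (𝓝 ((1 / √(1 + 0 ^ 2)) ^ 3)) := by
        have hc : ContinuousAt (fun t : ℝ => (1 / √(1 + t ^ 2)) ^ 3) 0 := by
          have : √(1 + (0 : ℝ) ^ 2) ≠ 0 := by simp
          fun_prop (disch := assumption)
        exact hc.tendsto.comp tendsto_inv_atTop_zero
      have h2 : ((1 / √(1 + 0 ^ 2)) ^ 3 : ℝ) = 1 := by simp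
      rw [h2] at h1
      refine h1.congr' ?_
      filter_upwards [eventually_gt_atTop 0] with r hr
      have : r ^ 2 + 1 ^ 2 = r ^ 2 * (1 + r⁻¹ ^ 2) := by field_simp
      rw [this, Real.sqrt_mul (by positivity), Real.sqrt_sq hr.le]
      congr 1
      field_simp
    rw [integral_Ioi_of_hasDerivAt_of_nonneg' hd (fun r _ => by positivity) ht]
    simp
  unfold regRadius
  rw [h, hv]
  simp only [finrank_euclideanSpace, Fintype.card_fin, smul_eq_mul, nsmul_eq_mul]
  rw [hI]
  push_cast
  ring

/-- The source `ε² b(s)` rescaled by `y = εz`. -/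
lemma rescaled_source (l : ℝ) {ε : ℝ} (hε : 0 < ε) (z : E3) :
    ε ^ 5 * profB l (regRadius ε (ε • z)) =
      exp (-(l * (ε * regRadius 1 z))) * (l ^ 2 * ε ^ 2 / regRadius 1 z ^ 3
        + 3 * l * ε / regRadius 1 z ^ 4 + 3 / regRadius 1 z ^ 5) := by
  have hs := regRadius_pos one_pos z
  have : regRadius ε (ε • z) = ε * regRadius 1 z := by
    unfold regRadius
    rw [norm_smul, Real.norm_of_nonneg hε.le,
      show (ε * ‖z‖) ^ 2 + ε ^ 2 = ε ^ 2 * (‖z‖ ^ 2 + 1 ^ 2) by ring,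
      Real.sqrt_mul (by positivity), Real.sqrt_sq hε.le]
  rw [this, profB]
  field_simp

/-- The sources `ε² b(s)` form an approximate identity of mass `4π`. After rescaling, the term
`l² ε² σ⁻³` is not integrable by itself, but `t e⁻ᵗ ≤ 1` trades one factor `lεσ` for a power of
decay. -/
lemma tendsto_integral_source {l : ℝ} (hl : 0 < l) {g : E3 → ℝ} (hg : Continuous g) {C : ℝ}
    (hC : ∀ y, |g y| ≤ C) :
    Tendsto (fun ε => ∫ y, ε ^ 2 * profB l (regRadius ε y) * g y) (𝓝[>] 0)
      (𝓝 (4 * π * g 0)) := by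
  have hscale : ∀ ε : ℝ, 0 < ε → ∫ y, ε ^ 2 * profB l (regRadius ε y) * g y =
      ∫ z : E3, exp (-(l * (ε * regRadius 1 z))) * (l ^ 2 * ε ^ 2 / regRadius 1 z ^ 3
        + 3 * l * ε / regRadius 1 z ^ 4 + 3 / regRadius 1 z ^ 5) * g (ε • z) := by
    intro ε hε
    have h := Measure.integral_comp_smul (volume : Measure E3)
      (fun y => ε ^ 2 * profB l (regRadius ε y) * g y) ε
    simp only [finrank_euclideanSpace, Fintype.card_fin, smul_eq_mul] at h
    rw [abs_of_pos (by positivity), inv_mul_eq_div, eq_div_iff (by positivity), mul_comm,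
      ← integral_const_mul] at h
    rw [← h]
    congr 1 with z
    rw [← rescaled_source l hε]
    ring
  have hlim : 4 * π * g 0 = ∫ z : E3, 3 / regRadius 1 z ^ 5 * g 0 := by
    rw [integral_mul_const, integral_three_div_regRadius]
  have hC0 : 0 ≤ C := (abs_nonneg _).trans (hC 0)
  have hcont := continuous_regRadius 1
  rw [hlim]
  refine Tendsto.congr' (f₁ := fun ε => ∫ z : E3, exp (-(l * (ε * regRadius 1 z))) *
      (l ^ 2 * ε ^ 2 / regRadius 1 z ^ 3 + 3 * l * ε / regRadius 1 z ^ 4 + 3 / regRadius 1 z ^ 5)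
        * g (ε • z)) ?_ ?_
  · filter_upwards [self_mem_nhdsWithin] with ε hε
    exact (hscale ε hε).symm
  refine tendsto_integral_filter_of_dominated_convergence
    (fun z => (4 * l + 3) * (1 / regRadius 1 z ^ 4) * C) (Eventually.of_forall fun ε => ?_) ?_
    ((integrable_regRadius_pow_four.const_mul _).mul_const C) (ae_of_all _ fun z => ?_)
  · have := hg.measurable
    have := hcont.measurable
    exact Measurable.aestronglyMeasurable (by fun_prop)
  · filter_upwards [Ioc_mem_nhdsGT one_pos] with ε hε
    refine ae_of_all _ fun z => ?_
    have hε0 := hε.1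
    have hε1 := hε.2
    have hs := regRadius_pos one_pos z
    have hs1 := eps_le_regRadius 1 z
    generalize regRadius 1 z = s at *
    have hE1 : exp (-(l * (ε * s))) ≤ 1 := exp_le_one_iff.2 (by
      have : 0 < l * (ε * s) := by positivity
      linarith)
    have hE2 : l * (ε * s) * exp (-(l * (ε * s))) ≤ 1 := by
      rw [exp_neg, ← div_eq_mul_inv, div_le_one (exp_pos _)]
      linarith [add_one_le_exp (l * (ε * s))]
    rw [norm_mul, Real.norm_eq_abs, Real.norm_eq_abs, abs_of_pos (by positivity)]
    refine mul_le_mul ?_ (hC _) (abs_nonneg _) (by positivity)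
    have t1 : exp (-(l * (ε * s))) * (l ^ 2 * ε ^ 2 / s ^ 3) ≤ l * (1 / s ^ 4) := by
      calc exp (-(l * (ε * s))) * (l ^ 2 * ε ^ 2 / s ^ 3)
          = l * (ε * s) * exp (-(l * (ε * s))) * (l * ε * (1 / s ^ 4)) := by field_simp
        _ ≤ 1 * (l * 1 * (1 / s ^ 4)) := by gcongr
        _ = _ := by ring
    have t2 : exp (-(l * (ε * s))) * (3 * l * ε / s ^ 4) ≤ 3 * l * (1 / s ^ 4) := by
      calc exp (-(l * (ε * s))) * (3 * l * ε / s ^ 4) ≤ 1 * (3 * l * 1 / s ^ 4) := by gcongr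
        _ = _ := by ring
    have t3 : exp (-(l * (ε * s))) * (3 / s ^ 5) ≤ 3 * (1 / s ^ 4) := by
      calc exp (-(l * (ε * s))) * (3 / s ^ 5) ≤ 1 * (3 / s ^ 4) := by
            gcongr
            norm_num
        _ = _ := by ring
    rw [mul_add, mul_add]
    linarith
  · have hs := (regRadius_pos one_pos z).ne'
    have hc : ContinuousAt (fun ε : ℝ => exp (-(l * (ε * regRadius 1 z))) *
      (l ^ 2 * ε ^ 2 / regRadius 1 z ^ 3 + 3 * l * ε / regRadius 1 z ^ 4 + 3 / regRadius 1 z ^ 5)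
        * g (ε • z)) 0 := by fun_prop
    have h := hc.tendsto
    simp only [zero_mul, mul_zero, neg_zero, exp_zero, one_mul, zero_smul, zero_div, zero_add, ne_eq,
      OfNat.ofNat_ne_zero, not_false_eq_true, zero_pow] at h
    exact h.mono_left nhdsWithin_le_nhds

lemma continuous_laplacian {g : E3 → ℝ} (hg : ContDiff ℝ 2 g) : Continuous (laplacian g) :=
  continuous_finsetSum _ fun i _ =>
    (((hg.fderiv_right (m := 1) (by norm_num)).clm_apply
      contDiff_const).continuous_fderiv one_ne_zero).clm_apply continuous_const

/-- The defining property of a fundamental solution, tested against functions with bounded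
derivatives: the limit `ε → 0⁺` of Green's identity. -/
lemma integral_yukawa_mul_screened {l : ℝ} (hl : 0 < l) {g : E3 → ℝ}
    (hg : ContDiff ℝ 2 g) {C₀ C₁ C₂ : ℝ} (h0 : ∀ y, |g y| ≤ C₀)
    (h1 : ∀ i y, |fderiv ℝ g y (EuclideanSpace.single i 1)| ≤ C₁)
    (h2 : ∀ i y, |fderiv ℝ (fun y => fderiv ℝ g y (EuclideanSpace.single i 1)) y
      (EuclideanSpace.single i 1)| ≤ C₂) :
    ∫ y, exp (-(l * ‖y‖)) / ‖y‖ * (l ^ 2 * g y - laplacian g y) = 4 * π * g 0 := by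
  have hlap : ∀ y, |laplacian g y| ≤ ∑ _i : Fin 3, C₂ := fun y =>
    (Finset.abs_sum_le_sum_abs _ _).trans (Finset.sum_le_sum fun i _ => h2 i y)
  have hb : ∀ y, |l ^ 2 * g y - laplacian g y| ≤ l ^ 2 * C₀ + ∑ _i : Fin 3, C₂ := fun y => by
    refine (abs_sub _ _).trans (add_le_add ?_ (hlap y))
    rw [abs_mul, abs_of_nonneg (sq_nonneg l)]
    exact mul_le_mul_of_nonneg_left (h0 y) (sq_nonneg l)
  have hcl := continuous_laplacian hg
  have hcg := hg.continuous
  have hc : Continuous (fun y => l ^ 2 * g y - laplacian g y) := by fun_prop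
  refine tendsto_nhds_unique (tendsto_integral_regKernel hl hc hb)
    ((tendsto_integral_source hl hg.continuous h0).congr' ?_)
  filter_upwards [self_mem_nhdsWithin] with ε hε
  exact (integral_regKernel_mul_screened hl hε hg h0 h1 h2).symm

/-! ### The screened Poisson equation -/

lemma fderiv_reflect {h : E3 → ℝ} (hh : Differentiable ℝ h) (x y v : E3) :
    fderiv ℝ (fun y => h (x - y)) y v = -fderiv ℝ h (x - y) v := by
  have h3 := (hh (x - y)).hasFDerivAt.comp y ((hasFDerivAt_id y).const_sub x)
  have h4 : HasFDerivAt (fun y => h (x - y)) _ y := h3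
  rw [h4.fderiv]
  simp

theorem screened_poisson_solution (l : ℝ) (hl : 0 < l)
    (f : EuclideanSpace ℝ (Fin 3) → ℝ) (hf : ContDiff ℝ (⊤ : ℕ∞) f)
    (hbdd : ∀ n : ℕ, ∃ C : ℝ, ∀ x, ‖iteratedFDeriv ℝ n f x‖ ≤ C)
    (u : EuclideanSpace ℝ (Fin 3) → ℝ)
    (hu : ∀ x, u x = ∫ y : EuclideanSpace ℝ (Fin 3),
      Real.exp (-(l * ‖y‖)) / (4 * π * ‖y‖) * f (x - y)) :
    ContDiff ℝ 2 u ∧ ∀ x, -laplacian u x + l ^ 2 * u x = f x := by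
  set G : E3 → ℝ := fun y => exp (-(l * ‖y‖)) / (4 * π * ‖y‖) with hGdef
  have hGeq : ∀ y, G y = (4 * π)⁻¹ * (exp (-(l * ‖y‖)) / ‖y‖) := fun y => by
    simp only [hGdef]
    rw [div_mul_eq_div_div_swap, div_eq_inv_mul]
  have hG : Integrable G := by
    simp_rw [funext hGeq]
    exact (integrable_yukawa hl).const_mul _
  have hf2 : ContDiff ℝ 2 f := contDiff_infty.1 hf 2
  have hf' : ContDiff ℝ 1 (fderiv ℝ f) := hf2.fderiv_right (by norm_num)
  obtain ⟨C₀, h0⟩ := hbdd 0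
  obtain ⟨C₁, h1⟩ := hbdd 1
  obtain ⟨C₂, h2⟩ := hbdd 2
  simp only [norm_iteratedFDeriv_zero] at h0
  simp only [norm_iteratedFDeriv_one] at h1
  replace h2 : ∀ x, ‖fderiv ℝ (fderiv ℝ f) x‖ ≤ C₂ := fun x => by
    rw [← norm_iteratedFDeriv_one, norm_iteratedFDeriv_fderiv]; exact h2 x
  have hu' : u = fun x => ∫ y, G y • f (x - y) := funext hu
  have d1 : ∀ x, HasFDerivAt u (∫ y, G y • fderiv ℝ f (x - y)) x := fun x => by
    rw [hu']
    exact hasFDerivAt_integral_smul_translate hG (hf2.of_le (by norm_num)) h0 h1 x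
  have d2 := hasFDerivAt_integral_smul_translate hG hf' h1 h2
  have hc2 := continuous_integral_smul_translate hG (hf'.continuous_fderiv one_ne_zero) h2
  refine ⟨?_, fun x => ?_⟩
  · have h11 : ContDiff ℝ 1 (fun x => ∫ y, G y • fderiv ℝ f (x - y)) :=
      contDiff_one_iff_hasFDerivAt.2 ⟨_, hc2, d2⟩
    exact contDiff_succ_iff_hasFDerivAt (n := 1) |>.2 ⟨_, h11, d1⟩
  have hfd : fderiv ℝ u = fun x => ∫ y, G y • fderiv ℝ f (x - y) := funext fun x => (d1 x).fderiv
  have e2 : ∀ (v z : E3), fderiv ℝ (fun y => fderiv ℝ f y v) z v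
      = fderiv ℝ (fderiv ℝ f) z v v := fun v z => by
    rw [fderiv_clm_apply (hf'.differentiable one_ne_zero z) (by fun_prop)]
    simp
  have i2 := integrable_smul_translate hG (hf'.continuous_fderiv one_ne_zero) h2 x
  have i2' : ∀ v : E3, Integrable (fun y => G y * fderiv ℝ (fderiv ℝ f) (x - y) v v) := fun v => by
    have := ((i2).apply_continuousLinearMap v).apply_continuousLinearMap v
    simpa using this
  have eu : ∀ v : E3, fderiv ℝ (fun y => fderiv ℝ u y v) x v
      = ∫ y, G y * fderiv ℝ (fderiv ℝ f) (x - y) v v := fun v => by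
    rw [hfd, fderiv_clm_apply (d2 x).differentiableAt (by fun_prop), (d2 x).fderiv]
    simp
    rw [ContinuousLinearMap.integral_apply (i2),
      ContinuousLinearMap.integral_apply ((i2).apply_continuousLinearMap v)]
    simp
  have hlap : laplacian u x = ∫ y, G y * laplacian f (x - y) := by
    simp only [laplacian, eu, e2]
    rw [← integral_finsetSum _ fun i _ => i2' _]
    simp_rw [Finset.mul_sum]
  -- Test the fundamental solution against the reflected translate of `f`.
  set g : E3 → ℝ := fun y => f (x - y) with hg
  have hgc : ContDiff ℝ 2 g := hf2.comp (contDiff_const.sub contDiff_id)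
  have hfdiff : Differentiable ℝ f := hf2.differentiable two_ne_zero
  have hg1 : ∀ v y, fderiv ℝ g y v = -fderiv ℝ f (x - y) v := fun v y => fderiv_reflect hfdiff x y v
  have hg2 : ∀ v y, fderiv ℝ (fun y => fderiv ℝ g y v) y v
      = fderiv ℝ (fun y => fderiv ℝ f y v) (x - y) v := fun v y => by
    have hd : Differentiable ℝ (fun y => fderiv ℝ f y v) :=
      (hf'.clm_apply contDiff_const).differentiable one_ne_zero
    simp_rw [hg1]
    rw [fderiv_fun_neg, neg_apply, fderiv_reflect hd, neg_neg]
  have hglap : ∀ y, laplacian g y = laplacian f (x - y) := fun y => by simp only [laplacian, hg2]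
  have key := integral_yukawa_mul_screened hl hgc (C₀ := C₀) (C₁ := C₁) (C₂ := C₂)
    (fun y => h0 _)
    (fun i y => by
      rw [hg1, abs_neg]
      refine (ContinuousLinearMap.le_of_opNorm_le _ (h1 _) _).trans ?_
      simp)
    (fun i y => by
      rw [hg2, e2]
      refine (ContinuousLinearMap.le_of_opNorm_le _
        (ContinuousLinearMap.le_of_opNorm_le _ (h2 _) _) _).trans ?_
      simp)
  have iL : Integrable (fun y => G y * laplacian f (x - y)) := by
    simp only [laplacian, e2, Finset.mul_sum]
    exact integrable_finsetSum _ fun i _ => i2' _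
  have i0 : Integrable (fun y => G y * f (x - y)) :=
    integrable_smul_translate hG hf2.continuous h0 x
  have hfin : ∫ y, G y * (l ^ 2 * g y - laplacian g y) = g 0 := by
    simp_rw [hGeq, mul_assoc]
    rw [integral_const_mul, key]
    field_simp
  have hsplit : ∀ y, G y * (l ^ 2 * g y - laplacian g y)
      = l ^ 2 * (G y * f (x - y)) - G y * laplacian f (x - y) := fun y => by
    rw [hglap]; ring
  simp_rw [hsplit] at hfin
  rw [integral_sub (i0.const_mul _) iL, integral_const_mul, ← hlap, ← hu x] at hfin
  simp only [hg, sub_zero] at hfin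
  linarith
end

section
/- Let d ≥ 1 and let u₀ : ℝ^d → ℝ be bounded and continuous. Define u : (0, ∞) × ℝ^d → ℝ by u(t, x) = −log( (4πt)^{-d/2} ∫_{ℝ^d} exp(−|x − y|²/(4t)) · exp(−u₀(y)) dy ). Then the integrand is integrable, the inner integral is strictly positive, u is smooth on (0, ∞) × ℝ^d, and u satisfies the viscous Hamilton–Jacobi equation ∂_t u − Δ_x u + |∇_x u|² = 0 on (0, ∞) × ℝ^d. -/
/-!
Expanding the square in the heat kernel gives, with `w = exp (-u₀)`,
`∫ exp (-‖x - y‖² / (4t)) w y dy = exp (-‖x‖² / (4t)) * Z (1 / (4t), x / (2t))`, where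
`Z (s, z) = ∫ exp (⟪y, z⟫ - s ‖y‖²) w y dy` is a Laplace transform: its exponent is *linear* in the
parameter `(s, z)`. Hence `u = (d/2) log (4πt) + ‖x‖² / (4t) - log Z (1 / (4t), x / (2t))`
(`coleHopf_eq`).

Smoothness: differentiating `∫ exp (L y p) • f y` in `p` gives an integral of the same kind, with `f`
replaced by the vector-valued density `L y ⊗ f y` (`ExpIntegrable.hasFDerivAt`). The hypothesis
`ExpIntegrable` is inherited by the new density, so induction on the order, over all target spaces,
gives `C^∞` (`contDiffOn_nat`). For the Gaussian phase it holds wherever `s > 0`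
(`expIntegrable_phase`).

Equation: the derivatives of `Z` are moments of the density. The derivative in `s` is minus the
moment of `‖y‖²`, the Laplacian in `z` is that same moment, so `∂_s Z = -Δ_z Z`
(`hasFDerivAt_Z`, `hasFDerivAt_Z_coord`). Inserting this into the formula for `u` and applying the
chain rule, the Hamilton–Jacobi equation becomes an algebraic identity, checked coordinate by
coordinate (`hasDerivAt_coleHopf`).
-/

open Real MeasureTheory

namespace ViscousHJ

/-! ### Laplace-type integrals -/

section Laplace

variable {Y P H : Type} [TopologicalSpace Y] [MeasurableSpace Y] [BorelSpace Y]
  [NormedAddCommGroup P] [NormedSpace ℝ P] [NormedAddCommGroup H] {μ : Measure Y}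

/-- Exponential integrability with room to spare: `f` stays integrable against `exp (L y p)` even
after multiplication by `exp (ε ‖L y‖)` for some `ε > 0`. The room makes the condition stable under
small changes of `p` and under multiplication of `f` by `‖L y‖`. -/
def ExpIntegrable (μ : Measure Y) (L : Y → P →L[ℝ] ℝ) (f : Y → H) (p : P) : Prop :=
  ∃ ε > 0, Integrable (fun y => exp (L y p + ε * ‖L y‖) * ‖f y‖) μ

variable {L : Y → P →L[ℝ] ℝ} {f : Y → H} {p : P}

lemma le_inv_mul_exp {ε a : ℝ} (hε : 0 < ε) : a ≤ ε⁻¹ * exp (ε * a) := by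
  rw [inv_mul_eq_div, le_div_iff₀ hε]
  linarith [add_one_le_exp (ε * a)]

/-- Multiplying the density by a function of size `O(‖L y‖)` costs half of the room `ε`. -/
lemma ExpIntegrable.of_le {H' : Type} [NormedAddCommGroup H']
    {g : Y → H'} {K : ℝ} (h : ExpIntegrable μ L f p) (hL : Continuous L) (hg : Continuous g)
    (hK : 0 ≤ K) (hgf : ∀ y, ‖g y‖ ≤ K * (‖L y‖ * ‖f y‖)) : ExpIntegrable μ L g p := by
  obtain ⟨ε, hε, hi⟩ := h
  refine ⟨ε / 2, by positivity, (hi.const_mul (K * (ε / 2)⁻¹)).mono' ?_ ?_⟩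
  · exact (by fun_prop : Continuous fun y => exp (L y p + ε / 2 * ‖L y‖) * ‖g y‖)
      |>.aestronglyMeasurable
  · refine .of_forall fun y => ?_
    rw [Real.norm_of_nonneg (by positivity)]
    calc exp (L y p + ε / 2 * ‖L y‖) * ‖g y‖
        ≤ exp (L y p + ε / 2 * ‖L y‖) *
          (K * (((ε / 2)⁻¹ * exp (ε / 2 * ‖L y‖)) * ‖f y‖)) := by
          gcongr
          refine (hgf y).trans ?_
          gcongr
          exact le_inv_mul_exp (by positivity)
      _ = K * (ε / 2)⁻¹ * (exp (L y p + ε * ‖L y‖) * ‖f y‖) := by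
          rw [show L y p + ε * ‖L y‖ = (L y p + ε / 2 * ‖L y‖) + ε / 2 * ‖L y‖ by ring,
            exp_add (L y p + ε / 2 * ‖L y‖)]
          ring

variable [NormedSpace ℝ H]

lemma ExpIntegrable.smulRight (h : ExpIntegrable μ L f p) (hL : Continuous L)
    (hf : Continuous f) : ExpIntegrable μ L (fun y => (L y).smulRight (f y)) p := by
  refine h.of_le hL ?_ zero_le_one (fun y => by simp)
  exact (ContinuousLinearMap.smulRightL ℝ P H).continuous₂.comp (hL.prodMk hf)

variable [SecondCountableTopology Y]

lemma ExpIntegrable.integrable (h : ExpIntegrable μ L f p) (hL : Continuous L)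
    (hf : Continuous f) : Integrable (fun y => exp (L y p) • f y) μ := by
  obtain ⟨ε, hε, hi⟩ := h
  refine hi.mono' ?_ (.of_forall fun y => ?_)
  · exact (by fun_prop : Continuous fun y => exp (L y p) • f y).aestronglyMeasurable
  · rw [norm_smul, Real.norm_of_nonneg (by positivity)]
    gcongr
    nlinarith [norm_nonneg (L y)]

/-- Differentiation under the integral sign: on the ball of radius `ε / 2` around `p`, the
derivative of the integrand is dominated by a multiple of `exp (L y p + ε ‖L y‖) ‖f y‖`. -/
lemma ExpIntegrable.hasFDerivAt (h : ExpIntegrable μ L f p)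
    (hL : Continuous L) (hf : Continuous f) :
    HasFDerivAt (fun q => ∫ y, exp (L y q) • f y ∂μ)
      (∫ y, exp (L y p) • (L y).smulRight (f y) ∂μ) p := by
  have hint := h.integrable hL hf
  have hint' := (h.smulRight hL hf).integrable hL
    ((ContinuousLinearMap.smulRightL ℝ P H).continuous₂.comp (hL.prodMk hf))
  obtain ⟨ε, hε, hi⟩ := h
  refine hasFDerivAt_integral_of_dominated_of_fderiv_le
    (F := fun q y => exp (L y q) • f y)
    (F' := fun q y => exp (L y q) • (L y).smulRight (f y))
    (bound := fun y => (ε / 2)⁻¹ * (exp (L y p + ε * ‖L y‖) * ‖f y‖))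
    (Metric.ball_mem_nhds p (half_pos hε)) (.of_forall fun q => ?_) hint
    hint'.aestronglyMeasurable (.of_forall fun y q hq => ?_) (hi.const_mul _)
    (.of_forall fun y q _ => ?_)
  · exact (by fun_prop : Continuous fun y => exp (L y q) • f y).aestronglyMeasurable
  · rw [norm_smul, Real.norm_of_nonneg (by positivity), ContinuousLinearMap.norm_smulRight_apply]
    have h1 : L y q ≤ L y p + ε / 2 * ‖L y‖ := by
      have h2 : L y (q - p) ≤ ‖L y‖ * ‖q - p‖ :=
        (le_abs_self _).trans ((L y).le_opNorm (q - p))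
      have h3 : ‖q - p‖ ≤ ε / 2 := (mem_ball_iff_norm.1 hq).le
      rw [map_sub] at h2
      nlinarith [norm_nonneg (L y)]
    calc exp (L y q) * (‖L y‖ * ‖f y‖)
        ≤ exp (L y p + ε / 2 * ‖L y‖) * (((ε / 2)⁻¹ * exp (ε / 2 * ‖L y‖)) * ‖f y‖) := by
          gcongr
          exact le_inv_mul_exp (by positivity)
      _ = (ε / 2)⁻¹ * (exp (L y p + ε * ‖L y‖) * ‖f y‖) := by
          rw [show L y p + ε * ‖L y‖ = (L y p + ε / 2 * ‖L y‖) + ε / 2 * ‖L y‖ by ring,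
            exp_add (L y p + ε / 2 * ‖L y‖)]
          ring
  · have := ((L y).hasFDerivAt (x := q)).exp.smul_const (f y)
    convert this using 1
    ext v
    simp [mul_smul]

/-- The derivative is an integral of the same type with vector-valued density `L y ⊗ f y`, so
smoothness of every order follows by induction over all target spaces. -/
lemma contDiffOn_nat (hL : Continuous L) {U : Set P} (hU : IsOpen U) (n : ℕ) :
    ∀ {H : Type} [NormedAddCommGroup H] [NormedSpace ℝ H] {f : Y → H}, Continuous f →
    (∀ p ∈ U, ExpIntegrable μ L f p) →
    ContDiffOn ℝ n (fun q => ∫ y, exp (L y q) • f y ∂μ) U := by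
  induction n with
  | zero =>
    intro H _ _ f hf h
    exact contDiffOn_zero.2 fun q hq =>
      ((h q hq).hasFDerivAt hL hf).continuousAt.continuousWithinAt
  | succ n ih =>
    intro H _ _ f hf h
    push_cast
    rw [contDiffOn_succ_iff_hasFDerivWithinAt_of_uniqueDiffOn hU.uniqueDiffOn]
    refine ⟨by simp, fun q => ∫ y, exp (L y q) • (L y).smulRight (f y) ∂μ, ?_, fun q hq =>
      ((h q hq).hasFDerivAt hL hf).hasFDerivWithinAt⟩
    exact ih ((ContinuousLinearMap.smulRightL ℝ P H).continuous₂.comp (hL.prodMk hf))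
      fun q hq => (h q hq).smulRight hL hf

/-- Directional form of the derivative for a scalar density. -/
lemma ExpIntegrable.fderiv_apply {w : Y → ℝ} (h : ExpIntegrable μ L w p) (hL : Continuous L)
    (hw : Continuous w) (v : P) :
    (∫ y, exp (L y p) • (L y).smulRight (w y) ∂μ) v = ∫ y, exp (L y p) * (w y * L y v) ∂μ := by
  rw [ContinuousLinearMap.integral_apply]
  · simp [mul_comm]
  · exact (h.smulRight hL hw).integrable hL
      ((ContinuousLinearMap.smulRightL ℝ P ℝ).continuous₂.comp (hL.prodMk hw))

end Laplace
/-! ### The Gaussian phase -/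

/-- Euclidean space of dimension `d`. -/
abbrev E (d : ℕ) : Type := EuclideanSpace ℝ (Fin d)

section Gaussian

variable {d : ℕ}

/-- The linear functional `(s, z) ↦ ⟪y, z⟫ - s ‖y‖²`. -/
noncomputable def phase (y : E d) : ℝ × E d →L[ℝ] ℝ :=
  (innerSL ℝ y).comp (ContinuousLinearMap.snd ℝ ℝ (E d)) -
    ‖y‖ ^ 2 • ContinuousLinearMap.fst ℝ ℝ (E d)

lemma phase_apply (y : E d) (p : ℝ × E d) : phase y p = inner ℝ y p.2 - ‖y‖ ^ 2 * p.1 := by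
  simp [phase]

lemma phase_single (y : E d) (i : Fin d) : phase y (0, EuclideanSpace.single i 1) = y i := by
  simp [phase_apply, EuclideanSpace.inner_single_right]

lemma phase_sum (y : E d) (a : ℝ) (v : E d) :
    phase y (a, v) = ∑ i, (v i * y i - a * (y i * y i)) := by
  rw [phase_apply, EuclideanSpace.real_norm_sq_eq, Finset.sum_sub_distrib, ← Finset.mul_sum]
  simp only [PiLp.inner_apply, RCLike.inner_apply, conj_trivial, pow_two]
  ring

lemma continuous_phase : Continuous (phase (d := d)) := by
  unfold phase
  fun_prop

lemma norm_phase_le (y : E d) : ‖phase y‖ ≤ ‖y‖ + ‖y‖ ^ 2 := by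
  refine ContinuousLinearMap.opNorm_le_bound _ (by positivity) fun p => ?_
  rw [phase_apply]
  calc ‖inner ℝ y p.2 - ‖y‖ ^ 2 * p.1‖ ≤ ‖inner ℝ y p.2‖ + ‖‖y‖ ^ 2 * p.1‖ := norm_sub_le _ _
    _ ≤ ‖y‖ * ‖p.2‖ + ‖y‖ ^ 2 * ‖p.1‖ := by
        gcongr
        · exact norm_inner_le_norm _ _
        · simp
    _ ≤ (‖y‖ + ‖y‖ ^ 2) * ‖p‖ := by
        rw [add_mul]
        gcongr
        · exact norm_snd_le p
        · exact norm_fst_le p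

lemma integrable_exp_neg_mul_sq {b : ℝ} (hb : 0 < b) :
    Integrable (fun y : E d => exp (-b * ‖y‖ ^ 2)) := by
  have h := (GaussianFourier.integrable_cexp_neg_mul_sq_norm_add (V := E d) (b := (b : ℂ))
    (by simpa using hb) 0 0).norm
  refine h.congr (.of_forall fun y => ?_)
  simp [Complex.norm_exp, ← Complex.ofReal_pow]

lemma expIntegrable_phase {w : E d → ℝ} (hw : Continuous w) {K : ℝ} (hK : ∀ y, |w y| ≤ K)
    {p : ℝ × E d} (hp : 0 < p.1) : ExpIntegrable volume phase w p := by
  obtain ⟨s, z⟩ := p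
  change 0 < s at hp
  have hphase := continuous_phase (d := d)
  refine ⟨s / 2, by positivity, ((integrable_exp_neg_mul_sq (d := d) (b := s / 4)
    (by positivity)).const_mul (exp ((‖z‖ + s / 2) ^ 2 / s) * K)).mono' ?_
    (.of_forall fun y => ?_)⟩
  · exact (by fun_prop : Continuous fun y => exp (phase y (s, z) + s / 2 * ‖phase y‖) * ‖w y‖)
      |>.aestronglyMeasurable
  · have h1 : phase y (s, z) + s / 2 * ‖phase y‖
        ≤ (‖z‖ + s / 2) ^ 2 / s + -(s / 4) * ‖y‖ ^ 2 := by
      have h2 := norm_phase_le y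
      have h3 : inner ℝ y z ≤ ‖y‖ * ‖z‖ := real_inner_le_norm y z
      rw [phase_apply]
      -- completing the square: `c a ≤ c² / s + (s / 4) a²` with `c = ‖z‖ + s / 2`, `a = ‖y‖`
      have h4 : (‖z‖ + s / 2) * ‖y‖ ≤ (‖z‖ + s / 2) ^ 2 / s + s / 4 * ‖y‖ ^ 2 := by
        have : 0 ≤ ((‖z‖ + s / 2) - s / 2 * ‖y‖) ^ 2 / s := by positivity
        have h5 : ((‖z‖ + s / 2) - s / 2 * ‖y‖) ^ 2 / s =
            (‖z‖ + s / 2) ^ 2 / s + s / 4 * ‖y‖ ^ 2 - (‖z‖ + s / 2) * ‖y‖ := by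
          field_simp
          ring
        linarith
      have h6 : s / 2 * ‖phase y‖ ≤ s / 2 * (‖y‖ + ‖y‖ ^ 2) := by gcongr
      simp only
      linarith
    rw [Real.norm_of_nonneg (by positivity)]
    calc exp (phase y (s, z) + s / 2 * ‖phase y‖) * ‖w y‖
        ≤ exp ((‖z‖ + s / 2) ^ 2 / s + -(s / 4) * ‖y‖ ^ 2) * K := by
          gcongr
          exact hK y
      _ = _ := by rw [exp_add]; ring

/-- The phase integral with density `w`, that is, the Laplace transform of `w` pushed forward along
`y ↦ (-‖y‖², y)`. -/
noncomputable def Z (w : E d → ℝ) (p : ℝ × E d) : ℝ := ∫ y, exp (phase y p) * w y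

/-- Completing the square in the heat kernel separates the factor `exp (-‖x‖² / (4t))`. -/
lemma exp_heat (t : ℝ) (ht : 0 < t) (x y : E d) :
    exp (-‖x - y‖ ^ 2 / (4 * t)) =
      exp (-‖x‖ ^ 2 / (4 * t)) * exp (phase y ((4 * t)⁻¹, (2 * t)⁻¹ • x)) := by
  rw [← exp_add, phase_apply, norm_sub_sq_real]
  simp only [inner_smul_right, real_inner_comm x y]
  congr 1
  field_simp
  ring

variable {w : E d → ℝ} {K : ℝ}

lemma integrable_phase (hw : Continuous w) (hK : ∀ y, |w y| ≤ K) {p : ℝ × E d}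
    (hp : 0 < p.1) :
    Integrable fun y => exp (phase y p) * w y :=
  (expIntegrable_phase hw hK hp).integrable continuous_phase hw

lemma contDiffOn_Z (hw : Continuous w) (hK : ∀ y, |w y| ≤ K) :
    ContDiffOn ℝ (⊤ : ℕ∞) (Z w) {p : ℝ × E d | 0 < p.1} :=
  contDiffOn_infty.2 fun n => contDiffOn_nat continuous_phase
    (isOpen_lt continuous_const continuous_fst) n hw fun _ hp => expIntegrable_phase hw hK hp

lemma expIntegrable_coord (hw : Continuous w) (hK : ∀ y, |w y| ≤ K) {p : ℝ × E d}
    (hp : 0 < p.1) (i : Fin d) :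
    ExpIntegrable volume phase (fun y => w y * y i) p := by
  refine (expIntegrable_phase hw hK hp).of_le (K := ‖((0 : ℝ), EuclideanSpace.single i (1 : ℝ))‖)
    continuous_phase (by fun_prop) (by positivity) fun y => ?_
  rw [norm_mul, ← phase_single y i]
  calc _ ≤ ‖w y‖ * (‖phase y‖ * ‖((0 : ℝ), EuclideanSpace.single i (1 : ℝ))‖) := by
        gcongr
        exact (phase y).le_opNorm _
    _ = _ := by ring

lemma expIntegrable_coord_sq (hw : Continuous w) (hK : ∀ y, |w y| ≤ K) {p : ℝ × E d}
    (hp : 0 < p.1) (i : Fin d) :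
    ExpIntegrable volume phase (fun y => w y * y i * y i) p := by
  refine (expIntegrable_coord hw hK hp i).of_le
    (K := ‖((0 : ℝ), EuclideanSpace.single i (1 : ℝ))‖)
    continuous_phase (by fun_prop) (by positivity) fun y => ?_
  rw [norm_mul]
  nth_rw 2 [← phase_single y i]
  calc _ ≤ ‖w y * y i‖ * (‖phase y‖ * ‖((0 : ℝ), EuclideanSpace.single i (1 : ℝ))‖) := by
        gcongr
        exact (phase y).le_opNorm _
    _ = _ := by ring

/-- First derivatives of the phase integral are first and second moments; the `s`-derivative is
minus the sum of the pure second moments. -/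
lemma hasFDerivAt_Z (hw : Continuous w) (hK : ∀ y, |w y| ≤ K) {p : ℝ × E d}
    (hp : 0 < p.1) : ∃ Z' : ℝ × E d →L[ℝ] ℝ,
    HasFDerivAt (Z w) Z' p ∧ ∀ a v, Z' (a, v) =
      ∑ i, v i * Z (fun y => w y * y i) p - a * ∑ i, Z (fun y => w y * y i * y i) p := by
  have h := expIntegrable_phase hw hK hp
  refine ⟨_, h.hasFDerivAt continuous_phase hw, fun a v => ?_⟩
  rw [h.fderiv_apply continuous_phase hw]
  have h1 i := (expIntegrable_coord hw hK hp i).integrable continuous_phase (by fun_prop)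
  have h2 i := (expIntegrable_coord_sq hw hK hp i).integrable continuous_phase (by fun_prop)
  simp only [smul_eq_mul] at h1 h2
  simp only [Z, Finset.mul_sum, ← Finset.sum_sub_distrib, ← integral_const_mul]
  simp_rw [← integral_sub ((h1 _).const_mul _) ((h2 _).const_mul _)]
  refine Eq.trans ?_ (integral_finsetSum _ fun i _ =>
    ((h1 i).const_mul (v i)).sub ((h2 i).const_mul a))
  congr 1
  ext y
  rw [phase_sum y a v, Finset.mul_sum, Finset.mul_sum]
  exact Finset.sum_congr rfl fun i _ => by simp only; ring

lemma hasFDerivAt_Z_coord (hw : Continuous w) (hK : ∀ y, |w y| ≤ K) {p : ℝ × E d}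
    (hp : 0 < p.1) (i : Fin d) : ∃ Z' : ℝ × E d →L[ℝ] ℝ,
    HasFDerivAt (Z fun y => w y * y i) Z' p ∧
      Z' (0, EuclideanSpace.single i 1) = Z (fun y => w y * y i * y i) p := by
  have h := expIntegrable_coord hw hK hp i
  refine ⟨_, h.hasFDerivAt continuous_phase (by fun_prop), ?_⟩
  rw [h.fderiv_apply continuous_phase (by fun_prop)]
  simp only [phase_single, Z]

lemma Z_pos (hw : Continuous w) (hK : ∀ y, |w y| ≤ K) (hpos : ∀ y, 0 < w y)
    {p : ℝ × E d} (hp : 0 < p.1) : 0 < Z w p := by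
  rw [Z, integral_pos_iff_support_of_nonneg (fun y => by have := hpos y; positivity)
    (integrable_phase hw hK hp)]
  have : Function.support (fun y => exp (phase y p) * w y) = Set.univ :=
    Set.eq_univ_of_forall fun y => (mul_pos (exp_pos _) (hpos y)).ne'
  rw [this]
  exact isOpen_univ.measure_pos volume Set.univ_nonempty

end Gaussian
/-! ### The Cole–Hopf solution -/

section ColeHopf

variable {d : ℕ} {w : E d → ℝ} {K : ℝ}

/-- The Cole–Hopf solution, written through the phase integral. -/
noncomputable def coleHopf (w : E d → ℝ) (t : ℝ) (x : E d) : ℝ :=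
  d / 2 * log (4 * π * t) + ‖x‖ ^ 2 * (4 * t)⁻¹ - log (Z w ((4 * t)⁻¹, (2 * t)⁻¹ • x))

lemma heat_integral_eq (w : E d → ℝ) {t : ℝ} (ht : 0 < t) (x : E d) :
    ∫ y, exp (-‖x - y‖ ^ 2 / (4 * t)) * w y =
      exp (-‖x‖ ^ 2 / (4 * t)) * Z w ((4 * t)⁻¹, (2 * t)⁻¹ • x) := by
  rw [Z, ← integral_const_mul]
  congr 1
  ext y
  rw [exp_heat t ht, mul_assoc]

lemma coleHopf_eq (hw : Continuous w) (hK : ∀ y, |w y| ≤ K) (hpos : ∀ y, 0 < w y)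
    {t : ℝ} (ht : 0 < t) (x : E d) :
    -log ((4 * π * t) ^ (-(d : ℝ) / 2) * ∫ y, exp (-‖x - y‖ ^ 2 / (4 * t)) * w y) =
      coleHopf w t x := by
  have hZ : 0 < Z w ((4 * t)⁻¹, (2 * t)⁻¹ • x) := Z_pos hw hK hpos (by simpa using ht)
  have h4 : 0 < 4 * π * t := by positivity
  rw [heat_integral_eq w ht, log_mul (by positivity) (by positivity),
    log_mul (by positivity) hZ.ne', log_rpow h4, log_exp, coleHopf]
  ring

lemma contDiffOn_coleHopf (hw : Continuous w) (hK : ∀ y, |w y| ≤ K) (hpos : ∀ y, 0 < w y) :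
    ContDiffOn ℝ (⊤ : ℕ∞) (fun p : ℝ × E d => coleHopf w p.1 p.2) {p | 0 < p.1} := by
  have h4 : ContDiffOn ℝ (⊤ : ℕ∞) (fun p : ℝ × E d => (4 * p.1)⁻¹) {p | 0 < p.1} :=
    (by fun_prop : ContDiff ℝ (⊤ : ℕ∞) fun p : ℝ × E d => 4 * p.1).contDiffOn.inv
      fun p (hp : 0 < p.1) => by positivity
  have h2 : ContDiffOn ℝ (⊤ : ℕ∞) (fun p : ℝ × E d => (2 * p.1)⁻¹ • p.2) {p | 0 < p.1} :=
    ((by fun_prop : ContDiff ℝ (⊤ : ℕ∞) fun p : ℝ × E d => 2 * p.1).contDiffOn.inv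
      fun p (hp : 0 < p.1) => by positivity).smul contDiff_snd.contDiffOn
  have hZ := (contDiffOn_Z hw hK).comp (h4.prodMk h2)
    fun p (hp : 0 < p.1) => show 0 < (4 * p.1)⁻¹ by positivity
  have hlog : ContDiffOn ℝ (⊤ : ℕ∞) (fun p : ℝ × E d => log (4 * π * p.1)) {p | 0 < p.1} :=
    (by fun_prop : ContDiff ℝ (⊤ : ℕ∞) fun p : ℝ × E d => 4 * π * p.1).contDiffOn.log
      fun p (hp : 0 < p.1) => by positivity
  refine ((contDiffOn_const.mul hlog).add
    ((contDiff_snd.norm_sq ℝ).contDiffOn.mul h4)).sub (hZ.log fun p (hp : 0 < p.1) => ?_)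
  exact (Z_pos hw hK hpos (show 0 < (4 * p.1)⁻¹ by positivity)).ne'

lemma hasFDerivAt_point (t : ℝ) (x : E d) :
    HasFDerivAt (fun x : E d => ((4 * t)⁻¹, (2 * t)⁻¹ • x))
      ((2 * t)⁻¹ • ContinuousLinearMap.inr ℝ ℝ (E d)) x := by
  refine ((hasFDerivAt_const (4 * t)⁻¹ x).prodMk
    ((hasFDerivAt_id x).const_smul (2 * t)⁻¹)).congr_fderiv ?_
  ext v <;> simp

lemma fderiv_coleHopf (hw : Continuous w) (hK : ∀ y, |w y| ≤ K) (hpos : ∀ y, 0 < w y)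
    {t : ℝ} (ht : 0 < t) (x : E d) (i : Fin d) :
    fderiv ℝ (coleHopf w t) x (EuclideanSpace.single i 1) =
      (2 * t)⁻¹ * (x i - Z (fun y => w y * y i) ((4 * t)⁻¹, (2 * t)⁻¹ • x) /
        Z w ((4 * t)⁻¹, (2 * t)⁻¹ • x)) := by
  have hs : 0 < (4 * t)⁻¹ := by positivity
  obtain ⟨Z', hZ', hv⟩ := hasFDerivAt_Z hw hK (p := ((4 * t)⁻¹, (2 * t)⁻¹ • x)) hs
  have hZ := Z_pos hw hK hpos (p := ((4 * t)⁻¹, (2 * t)⁻¹ • x)) hs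
  have h0 : HasFDerivAt (fun x => Z w ((4 * t)⁻¹, (2 * t)⁻¹ • x)) _ x :=
    hZ'.comp (g := Z w) x (hasFDerivAt_point t x)
  have h1 := h0.log hZ.ne'
  have h2 := (((hasStrictFDerivAt_norm_sq x).hasFDerivAt.mul_const (4 * t)⁻¹).const_add
    (d / 2 * log (4 * π * t))).sub h1
  have h3 : fderiv ℝ (coleHopf w t) x = _ := h2.fderiv
  rw [h3]
  simp [hv, EuclideanSpace.inner_single_right]
  field_simp
  ring

lemma fderiv_fderiv_coleHopf (hw : Continuous w) (hK : ∀ y, |w y| ≤ K) (hpos : ∀ y, 0 < w y)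
    {t : ℝ} (ht : 0 < t) (x : E d) (i : Fin d) :
    fderiv ℝ (fun y => fderiv ℝ (coleHopf w t) y (EuclideanSpace.single i 1)) x
      (EuclideanSpace.single i 1) =
      (2 * t)⁻¹ * (1 - (2 * t)⁻¹ *
        (Z (fun y => w y * y i * y i) ((4 * t)⁻¹, (2 * t)⁻¹ • x) /
          Z w ((4 * t)⁻¹, (2 * t)⁻¹ • x) -
        (Z (fun y => w y * y i) ((4 * t)⁻¹, (2 * t)⁻¹ • x) /
          Z w ((4 * t)⁻¹, (2 * t)⁻¹ • x)) ^ 2)) := by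
  have hs : 0 < (4 * t)⁻¹ := by positivity
  obtain ⟨A', hA', hAv⟩ := hasFDerivAt_Z hw hK (p := ((4 * t)⁻¹, (2 * t)⁻¹ • x)) hs
  obtain ⟨B', hB', hBv⟩ := hasFDerivAt_Z_coord hw hK (p := ((4 * t)⁻¹, (2 * t)⁻¹ • x)) hs i
  have hZ := Z_pos hw hK hpos (p := ((4 * t)⁻¹, (2 * t)⁻¹ • x)) hs
  have hA : HasFDerivAt (fun x => Z w ((4 * t)⁻¹, (2 * t)⁻¹ • x)) _ x :=
    hA'.comp (g := Z w) x (hasFDerivAt_point t x)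
  have hB : HasFDerivAt (fun x => Z (fun y => w y * y i) ((4 * t)⁻¹, (2 * t)⁻¹ • x)) _ x :=
    hB'.comp (g := Z fun y => w y * y i) x (hasFDerivAt_point t x)
  have hA2 : HasFDerivAt (fun x => (Z w ((4 * t)⁻¹, (2 * t)⁻¹ • x))⁻¹) _ x :=
    (hasDerivAt_inv hZ.ne').comp_hasFDerivAt x hA
  have h2 : HasFDerivAt (fun x : E d => (2 * t)⁻¹ *
      (x i - Z (fun y => w y * y i) ((4 * t)⁻¹, (2 * t)⁻¹ • x) *
        (Z w ((4 * t)⁻¹, (2 * t)⁻¹ • x))⁻¹)) _ x :=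
    (((EuclideanSpace.proj i : E d →L[ℝ] ℝ).hasFDerivAt (x := x)).sub
      (hB.mul hA2)).const_mul (2 * t)⁻¹
  simp_rw [fderiv_coleHopf hw hK hpos ht, div_eq_mul_inv]
  rw [h2.fderiv]
  simp [hAv, hBv, ht.ne']
  field_simp
  ring

lemma norm_gradient_sq (f : E d → ℝ) (x : E d) :
    ‖gradient f x‖ ^ 2 = ∑ i, (fderiv ℝ f x (EuclideanSpace.single i 1)) ^ 2 := by
  rw [EuclideanSpace.real_norm_sq_eq]
  refine Finset.sum_congr rfl fun i _ => ?_
  have h : inner ℝ (gradient f x) (EuclideanSpace.single i (1 : ℝ)) =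
      fderiv ℝ f x (EuclideanSpace.single i 1) := InnerProductSpace.toDual_symm_apply
  rw [← h, EuclideanSpace.inner_single_right]
  simp

/-- The Hamilton–Jacobi equation. Writing `d / (2t)` as a sum over coordinates, both sides are sums
over `i` of expressions in `x i`, `Z` and its moments, and the summands agree. -/
lemma hasDerivAt_coleHopf (hw : Continuous w) (hK : ∀ y, |w y| ≤ K) (hpos : ∀ y, 0 < w y)
    {t : ℝ} (ht : 0 < t) (x : E d) :
    HasDerivAt (fun s => coleHopf w s x)
      (laplacian (coleHopf w t) x - ‖gradient (coleHopf w t) x‖ ^ 2) t := by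
  have hs : 0 < (4 * t)⁻¹ := by positivity
  obtain ⟨A', hA', hAv⟩ := hasFDerivAt_Z hw hK (p := ((4 * t)⁻¹, (2 * t)⁻¹ • x)) hs
  have hZ := Z_pos hw hK hpos (p := ((4 * t)⁻¹, (2 * t)⁻¹ • x)) hs
  have h4 : HasDerivAt (fun s : ℝ => (4 * s)⁻¹) (-(4 * t ^ 2)⁻¹) t := by
    refine (((hasDerivAt_id' t).const_mul 4).fun_inv (by positivity)).congr_deriv ?_
    field_simp
  have h2 : HasDerivAt (fun s : ℝ => (2 * s)⁻¹) (-(2 * t ^ 2)⁻¹) t := by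
    refine (((hasDerivAt_id' t).const_mul 2).fun_inv (by positivity)).congr_deriv ?_
    field_simp
  have hlog : HasDerivAt (fun s : ℝ => log (4 * π * s)) t⁻¹ t := by
    refine (((hasDerivAt_id' t).const_mul (4 * π)).log (by positivity)).congr_deriv ?_
    field_simp
  have hA : HasDerivAt (fun s => Z w ((4 * s)⁻¹, (2 * s)⁻¹ • x)) _ t :=
    hA'.comp_hasDerivAt (l := Z w) t (h4.prodMk (h2.smul_const x))
  have h5 := hA.log hZ.ne'
  refine (((hlog.const_mul (d / 2 : ℝ)).add (h4.const_mul (‖x‖ ^ 2))).sub h5).congr_deriv ?_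
  rw [norm_gradient_sq, laplacian, hAv, EuclideanSpace.real_norm_sq_eq]
  simp_rw [fderiv_fderiv_coleHopf hw hK hpos ht, fderiv_coleHopf hw hK hpos ht]
  have hd : (d / 2 : ℝ) * t⁻¹ = ∑ _i : Fin d, (2 * t)⁻¹ := by
    simp
    ring
  rw [hd, sub_div, Finset.sum_mul, Finset.mul_sum, Finset.sum_div, Finset.sum_div,
    ← Finset.sum_add_distrib, ← Finset.sum_sub_distrib, ← Finset.sum_sub_distrib,
    ← Finset.sum_sub_distrib]
  refine Finset.sum_congr rfl fun i _ => ?_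
  simp only [PiLp.smul_apply, smul_eq_mul]
  generalize Z w ((4 * t)⁻¹, (2 * t)⁻¹ • x) = A at hZ ⊢
  field_simp
  ring

end ColeHopf

end ViscousHJ

theorem viscous_hamilton_jacobi_solution {d : ℕ} (hd : 1 ≤ d)
    (u₀ : EuclideanSpace ℝ (Fin d) → ℝ)
    (hcont : Continuous u₀) (hbdd : ∃ C : ℝ, ∀ y, |u₀ y| ≤ C)
    (u : ℝ → EuclideanSpace ℝ (Fin d) → ℝ)
    (hu : ∀ t, 0 < t → ∀ x, u t x = -Real.log ((4 * π * t) ^ (-(d : ℝ) / 2) *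
      ∫ y : EuclideanSpace ℝ (Fin d),
        Real.exp (-‖x - y‖ ^ 2 / (4 * t)) * Real.exp (-u₀ y))) :
    (∀ t, 0 < t → ∀ x : EuclideanSpace ℝ (Fin d),
      Integrable (fun y : EuclideanSpace ℝ (Fin d) =>
        Real.exp (-‖x - y‖ ^ 2 / (4 * t)) * Real.exp (-u₀ y))) ∧
    (∀ t, 0 < t → ∀ x : EuclideanSpace ℝ (Fin d),
      0 < ∫ y : EuclideanSpace ℝ (Fin d),
        Real.exp (-‖x - y‖ ^ 2 / (4 * t)) * Real.exp (-u₀ y)) ∧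
    ContDiffOn ℝ (⊤ : ℕ∞)
      (fun p : ℝ × EuclideanSpace ℝ (Fin d) => u p.1 p.2) {p | 0 < p.1} ∧
    (∀ t, 0 < t → ∀ x, HasDerivAt (fun s => u s x)
      (laplacian (u t) x - ‖gradient (u t) x‖ ^ 2) t) := by
  obtain ⟨C, hC⟩ := hbdd
  have hw : Continuous fun y => exp (-u₀ y) := by fun_prop
  have hpos : ∀ y, 0 < exp (-u₀ y) := fun y => exp_pos _
  have hK : ∀ y, |exp (-u₀ y)| ≤ exp C := fun y => by
    rw [abs_of_pos (hpos y), exp_le_exp]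
    linarith [neg_le_of_abs_le (hC y)]
  have hu' : ∀ t, 0 < t → ∀ x, u t x = ViscousHJ.coleHopf (fun y => exp (-u₀ y)) t x :=
    fun t ht x => (hu t ht x).trans (ViscousHJ.coleHopf_eq hw hK hpos ht x)
  refine ⟨fun t ht x => ?_, fun t ht x => ?_, ?_, fun t ht x => ?_⟩
  · have h := (ViscousHJ.integrable_phase hw hK (p := ((4 * t)⁻¹, (2 * t)⁻¹ • x))
      (by simpa using ht)).const_mul (exp (-‖x‖ ^ 2 / (4 * t)))
    refine h.congr (.of_forall fun y => ?_)
    simp only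
    rw [ViscousHJ.exp_heat t ht, mul_assoc]
  · rw [ViscousHJ.heat_integral_eq (fun y => exp (-u₀ y)) ht]
    exact mul_pos (exp_pos _) (ViscousHJ.Z_pos hw hK hpos (by simpa using ht))
  · exact (ViscousHJ.contDiffOn_coleHopf hw hK hpos).congr fun p hp => hu' p.1 hp p.2
  · rw [funext (hu' t ht)]
    refine (ViscousHJ.hasDerivAt_coleHopf hw hK hpos ht x).congr_of_eventuallyEq ?_
    filter_upwards [lt_mem_nhds ht] with s hs using hu' s hs x
end

section
/- Let π < θ < 2π and set α = π/θ, so 1/2 < α < 1. Let D_θ = {(r cos φ, r sin φ) : r > 0, 0 < φ < θ} ⊆ ℝ² and suppose u : ℝ² → ℝ satisfies u(r cos φ, r sin φ) = r^α sin(αφ) for all r > 0 and φ ∈ (0, θ). Then u is not Lipschitz continuous on D_θ ∩ B₁(0), where B₁(0) is the open Euclidean unit ball: there is no constant K such that |u(x) − u(y)| ≤ K |x − y| for all x, y ∈ D_θ ∩ B₁(0). -/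
/-!
On the bisecting ray `φ = θ / 2` of the sector the angular factor equals `sin (π / 2) = 1`, so `u`
restricts to `r ↦ r ^ α` with `α = π / θ < 1`. Comparing the points at distances `r` and `r / 2`
from the corner, a Lipschitz bound gives `r ^ α * (1 - 2⁻¹ ^ α) ≤ K * r / 2`. This fails for
small `r`, since `r ^ (α - 1)` is unbounded as `r → 0`.
-/

open Real MeasureTheory

/-- Along a fixed direction `φ` the polar map is an isometry in the radius. -/
lemma norm_polar_sub (r s φ : ℝ) :
    ‖(WithLp.equiv 2 (Fin 2 → ℝ)).symm ![r * Real.cos φ, r * Real.sin φ]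
      - (WithLp.equiv 2 (Fin 2 → ℝ)).symm ![s * Real.cos φ, s * Real.sin φ]‖ = |r - s| := by
  rw [EuclideanSpace.norm_eq, ← Real.sqrt_sq_eq_abs]
  congr 1
  simp only [Fin.sum_univ_two, Real.norm_eq_abs, sq_abs]
  simp
  linear_combination (r - s) ^ 2 * Real.sin_sq_add_cos_sq φ

lemma norm_polar (r φ : ℝ) :
    ‖(WithLp.equiv 2 (Fin 2 → ℝ)).symm ![r * Real.cos φ, r * Real.sin φ]‖ = |r| := by
  rw [EuclideanSpace.norm_eq, ← Real.sqrt_sq_eq_abs]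
  congr 1
  simp only [Fin.sum_univ_two, Real.norm_eq_abs, sq_abs]
  simp
  linear_combination r ^ 2 * Real.sin_sq_add_cos_sq φ

theorem sector_power_function_not_lipschitz (θ : ℝ)
    (hθ1 : π < θ) (hθ2 : θ < 2 * π)
    (u : EuclideanSpace ℝ (Fin 2) → ℝ)
    (hu : ∀ r φ : ℝ, 0 < r → 0 < φ → φ < θ →
      u ((WithLp.equiv 2 (Fin 2 → ℝ)).symm ![r * Real.cos φ, r * Real.sin φ])
        = r ^ (π / θ) * Real.sin ((π / θ) * φ)) :
    ¬ ∃ K : ℝ, ∀ x ∈ ({x : EuclideanSpace ℝ (Fin 2) |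
          ∃ r φ : ℝ, 0 < r ∧ 0 < φ ∧ φ < θ ∧
            x = (WithLp.equiv 2 (Fin 2 → ℝ)).symm ![r * Real.cos φ, r * Real.sin φ]}
          ∩ Metric.ball (0 : EuclideanSpace ℝ (Fin 2)) 1),
        ∀ y ∈ ({x : EuclideanSpace ℝ (Fin 2) |
          ∃ r φ : ℝ, 0 < r ∧ 0 < φ ∧ φ < θ ∧
            x = (WithLp.equiv 2 (Fin 2 → ℝ)).symm ![r * Real.cos φ, r * Real.sin φ]}
          ∩ Metric.ball (0 : EuclideanSpace ℝ (Fin 2)) 1),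
        |u x - u y| ≤ K * ‖x - y‖ := by
  rintro ⟨K, hK⟩
  have hπ := Real.pi_pos
  have hθ : 0 < θ := hπ.trans hθ1
  have hα0 : 0 < π / θ := div_pos hπ hθ
  have hα1 : π / θ < 1 := (div_lt_one hθ).2 hθ1
  have hsin : Real.sin (π / θ * (θ / 2)) = 1 := by
    rw [show π / θ * (θ / 2) = π / 2 by field_simp, Real.sin_pi_div_two]
  have hval : ∀ r : ℝ, 0 < r →
      u ((WithLp.equiv 2 (Fin 2 → ℝ)).symm ![r * Real.cos (θ / 2), r * Real.sin (θ / 2)])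
        = r ^ (π / θ) := fun r hr => by
    rw [hu r (θ / 2) hr (by linarith) (by linarith), hsin, mul_one]
  generalize π / θ = α at *
  have hc : 0 < 1 - (2⁻¹ : ℝ) ^ α := by
    linarith [Real.rpow_lt_one (x := (2⁻¹ : ℝ)) (by norm_num) (by norm_num) hα0]
  -- The radius is `r = t⁻¹` with `t` large, so that `r ^ α = t ^ (1 - α) * r`.
  obtain ⟨t, ht, ht2⟩ := (((tendsto_rpow_atTop (sub_pos.2 hα1)).eventually_gt_atTop
    (K / 2 / (1 - (2⁻¹ : ℝ) ^ α))).and (Filter.eventually_ge_atTop 2)).exists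
  have ht0 : 0 < t := by linarith
  have hr : 0 < t⁻¹ := inv_pos.2 ht0
  have hr1 : t⁻¹ < 1 := inv_lt_one_of_one_lt₀ (by linarith)
  have hrα : t⁻¹ ^ α = t ^ (1 - α) * t⁻¹ := by
    rw [Real.rpow_sub ht0, Real.rpow_one, Real.inv_rpow ht0.le]
    field_simp
  have hmem : ∀ r : ℝ, 0 < r → r < 1 →
      (WithLp.equiv 2 (Fin 2 → ℝ)).symm ![r * Real.cos (θ / 2), r * Real.sin (θ / 2)] ∈
        ({x : EuclideanSpace ℝ (Fin 2) |
          ∃ r φ : ℝ, 0 < r ∧ 0 < φ ∧ φ < θ ∧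
            x = (WithLp.equiv 2 (Fin 2 → ℝ)).symm ![r * Real.cos φ, r * Real.sin φ]}
          ∩ Metric.ball (0 : EuclideanSpace ℝ (Fin 2)) 1) := fun r hr hr1 =>
    ⟨⟨r, θ / 2, hr, by linarith, by linarith, rfl⟩, by
      rw [mem_ball_zero_iff, norm_polar, abs_of_pos hr]
      exact hr1⟩
  have h := hK _ (hmem t⁻¹ hr hr1) _ (hmem (2⁻¹ * t⁻¹) (by linarith) (by linarith))
  rw [norm_polar_sub, hval _ hr, hval _ (by linarith),
    Real.mul_rpow (by norm_num) hr.le, hrα, abs_of_pos (show 0 < t⁻¹ - 2⁻¹ * t⁻¹ by linarith)] at h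
  have h1 := (le_abs_self _).trans h
  rw [div_lt_iff₀ hc] at ht
  have h2 := mul_lt_mul_of_pos_right ht hr
  linarith
end
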